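/- arXiv:2407.21131 — 6 statements merged into one kernel-verified Lean document; each statement's English description precedes it below -/
import Mathlib

section
/- Let M be an n×n matrix with nonnegative real entries. Then M is convergent to zero if and only if the matrix I − M (where I is the n×n identity matrix) is invertible and its inverse (I − M)⁻¹ has nonnegative entries. -/
/-!
If `M ^ k → 0`, then `(1 - M) * ∑ m < k, M ^ m = 1 - M ^ k` has determinant tending to `1`, so
`1 - M` is invertible, and its inverse is the limit of the nonnegative partial sums of the Neumann
series. Conversely, if `1 - M` has a nonnegative inverse, then
`∑ m < k, M ^ m = (1 - M)⁻¹ - M ^ k * (1 - M)⁻¹ ≤ (1 - M)⁻¹` entrywise, so the entries of the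
powers are nonnegative with bounded partial sums and tend to zero.
-/

open Filter

/-- A square matrix with nonnegative real entries is *convergent to zero* if its powers
tend to the zero matrix. -/
def ConvergentToZero {n : ℕ} (M : Matrix (Fin n) (Fin n) ℝ) : Prop :=
  Tendsto (fun k : ℕ => M ^ k) atTop (nhds 0)

open Finset Topology

theorem geom_sum_eq_one_sub_pow_mul_inverse {R : Type*} [Ring R] {a : R}
    (ha : IsUnit (1 - a)) (k : ℕ) :
    ∑ m ∈ range k, a ^ m = (1 - a ^ k) * Ring.inverse (1 - a) := by
  rw [← geom_sum_mul_neg, Ring.mul_inverse_cancel_right _ _ ha]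

theorem tendsto_geom_sum_inverse_one_sub {R : Type*} [Ring R] [TopologicalSpace R]
    [IsTopologicalRing R] {a : R} (ha : IsTopologicallyNilpotent a) (hu : IsUnit (1 - a)) :
    Tendsto (fun k ↦ ∑ m ∈ range k, a ^ m) atTop (𝓝 (Ring.inverse (1 - a))) := by
  simpa only [geom_sum_eq_one_sub_pow_mul_inverse hu, sub_zero, one_mul] using
    (ha.const_sub 1).mul_const (Ring.inverse (1 - a))

theorem tendsto_zero_of_sum_range_le {K : Type*} [Field K] [LinearOrder K] [IsStrictOrderedRing K]
    [Archimedean K] [TopologicalSpace K] [OrderTopology K] {f : ℕ → K} {c : K}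
    (hf : ∀ k, 0 ≤ f k) (hc : ∀ k, ∑ m ∈ range k, f m ≤ c) : Tendsto f atTop (𝓝 0) := by
  have hcauchy : IsCauSeq abs fun k ↦ ∑ m ∈ range k, f m := by
    refine .of_mono_bounded _ (a := c) (m := 0) (fun k _ ↦ ?_) fun k _ ↦ ?_
    · rw [abs_of_nonneg (sum_nonneg fun m _ ↦ hf m)]
      exact hc k
    · rw [sum_range_succ]
      exact le_add_of_nonneg_right (hf k)
  refine (nhds_basis_abs_sub_lt (0 : K)).tendsto_right_iff.2 fun ε hε ↦ ?_
  obtain ⟨N, hN⟩ := hcauchy.cauchy₂ hε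
  filter_upwards [eventually_ge_atTop N] with k hk
  simpa [sum_range_succ] using hN (k + 1) (by lia) k hk

section Matrix

variable {ι K : Type*} [Fintype ι] [DecidableEq ι]

theorem isUnit_one_sub_matrix_of_isTopologicallyNilpotent [Field K] [TopologicalSpace K]
    [IsTopologicalRing K] [T1Space K] {M : Matrix ι ι K} (hM : IsTopologicallyNilpotent M) :
    IsUnit (1 - M) := by
  have hdet : Tendsto (fun k ↦ (1 - M ^ k).det) atTop (𝓝 1) := by
    have hcont : Continuous fun A : Matrix ι ι K ↦ (1 - A).det := by fun_prop
    simpa only [Function.comp_def, sub_zero, Matrix.det_one] using (hcont.tendsto 0).comp hM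
  obtain ⟨k, hk⟩ := (hdet.eventually_ne one_ne_zero).exists
  rw [← mul_neg_geom_sum, Matrix.det_mul] at hk
  exact (Matrix.isUnit_iff_isUnit_det _).2 (left_ne_zero_of_mul hk).isUnit

theorem geom_sum_apply_le_inv_one_sub_apply [CommRing K] [PartialOrder K] [IsOrderedRing K]
    {M : Matrix ι ι K} (hM : ∀ i j, 0 ≤ M i j) (hu : IsUnit (1 - M))
    (hinv : ∀ i j, 0 ≤ (1 - M)⁻¹ i j) (k : ℕ) (i j : ι) :
    ∑ m ∈ range k, (M ^ m) i j ≤ (1 - M)⁻¹ i j := by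
  have hrem : 0 ≤ (M ^ k * (1 - M)⁻¹) i j := by
    rw [Matrix.mul_apply]
    exact sum_nonneg fun l _ ↦ mul_nonneg (Matrix.pow_apply_nonneg hM k i l) (hinv l j)
  calc ∑ m ∈ range k, (M ^ m) i j = ((1 - M ^ k) * (1 - M)⁻¹) i j := by
        rw [← Matrix.sum_apply, geom_sum_eq_one_sub_pow_mul_inverse hu,
          Matrix.nonsing_inv_eq_ringInverse]
    _ = (1 - M)⁻¹ i j - (M ^ k * (1 - M)⁻¹) i j := by
        rw [sub_mul, one_mul, Matrix.sub_apply]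
    _ ≤ (1 - M)⁻¹ i j := sub_le_self _ hrem

theorem inv_one_sub_apply_nonneg_of_isTopologicallyNilpotent [CommRing K] [PartialOrder K]
    [IsOrderedRing K] [TopologicalSpace K] [IsTopologicalRing K] [OrderClosedTopology K]
    {M : Matrix ι ι K} (hM : ∀ i j, 0 ≤ M i j) (hnil : IsTopologicallyNilpotent M)
    (hu : IsUnit (1 - M)) (i j : ι) :
    0 ≤ (1 - M)⁻¹ i j := by
  have hlim := tendsto_geom_sum_inverse_one_sub hnil hu
  rw [← Matrix.nonsing_inv_eq_ringInverse] at hlim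
  refine ge_of_tendsto' ((hlim.apply_nhds i).apply_nhds j) fun k ↦ ?_
  rw [Matrix.sum_apply]
  exact sum_nonneg fun m _ ↦ Matrix.pow_apply_nonneg hM m i j

theorem convergentToZero_iff_inverse_nonneg_general [Field K] [LinearOrder K]
    [IsStrictOrderedRing K] [Archimedean K] [TopologicalSpace K] [OrderTopology K]
    (M : Matrix ι ι K) (hM : ∀ i j, 0 ≤ M i j) :
    IsTopologicallyNilpotent M ↔ (IsUnit (1 - M) ∧ ∀ i j, 0 ≤ (1 - M)⁻¹ i j) := by
  constructor
  · intro hnil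
    have hu := isUnit_one_sub_matrix_of_isTopologicallyNilpotent hnil
    exact ⟨hu, inv_one_sub_apply_nonneg_of_isTopologicallyNilpotent hM hnil hu⟩
  · rintro ⟨hu, hinv⟩
    refine tendsto_pi_nhds.2 fun i ↦ tendsto_pi_nhds.2 fun j ↦ ?_
    exact tendsto_zero_of_sum_range_le (fun k ↦ Matrix.pow_apply_nonneg hM k i j)
      fun k ↦ geom_sum_apply_le_inv_one_sub_apply hM hu hinv k i j

end Matrix

/-- A nonnegative square matrix `M` is convergent to zero if and only if
`I - M` is invertible and its inverse has nonnegative entries. -/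
theorem convergentToZero_iff_inverse_nonneg {n : ℕ} (M : Matrix (Fin n) (Fin n) ℝ)
    (hM : ∀ i j, 0 ≤ M i j) :
    ConvergentToZero M ↔ (IsUnit (1 - M) ∧ ∀ i j, 0 ≤ (1 - M)⁻¹ i j) :=
  convergentToZero_iff_inverse_nonneg_general M hM
end

section
/- Let M = [a_ij] (1 ≤ i, j ≤ 2) be a 2×2 matrix with nonnegative real entries. Then M is convergent to zero if and only if a11 < 1, a22 < 1, and a11 + a22 < 1 + a11·a22 − a12·a21. -/
open Filter

/-!
A nonnegative matrix `M` is convergent to zero if and only if `M v < v` entrywise for some `v ≥ 0`.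
Such a `v` is automatically positive, so `M v ≤ r v` for some `r < 1`, whence `M ^ k v ≤ r ^ k v`
and every entry of `M ^ k` decays geometrically. Conversely, if `M ^ N 1 < 1`, then
`v = (1 + M + ⋯ + M ^ (N - 1)) 1` satisfies `M v = v + M ^ N 1 - 1 < v`.
For a `2 × 2` matrix, the existence of such a `v` is a pair of linear inequalities in two unknowns.
-/

open Matrix Finset Topology

section OrderedSemiring

variable {m n R : Type*} [Fintype n]

theorem mulVec_le_mulVec_of_nonneg [Semiring R] [PartialOrder R] [IsOrderedRing R]
    {M : Matrix m n R} (hM : ∀ i j, 0 ≤ M i j) {v w : n → R} (h : v ≤ w) : M *ᵥ v ≤ M *ᵥ w :=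
  fun i ↦ dotProduct_le_dotProduct_of_nonneg_left h (hM i)

theorem mulVec_nonneg [Semiring R] [PartialOrder R] [IsOrderedRing R]
    {M : Matrix m n R} (hM : ∀ i j, 0 ≤ M i j) {v : n → R} (hv : 0 ≤ v) : 0 ≤ M *ᵥ v :=
  fun i ↦ dotProduct_nonneg_of_nonneg (hM i) hv

theorem pow_mulVec_le_pow_smul [DecidableEq n] [CommSemiring R] [PartialOrder R] [IsOrderedRing R]
    {M : Matrix n n R} (hM : ∀ i j, 0 ≤ M i j) {v : n → R} {r : R} (hr : 0 ≤ r)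
    (h : M *ᵥ v ≤ r • v) (k : ℕ) : M ^ k *ᵥ v ≤ r ^ k • v := by
  induction k with
  | zero => simp
  | succ k ih =>
    calc M ^ (k + 1) *ᵥ v = M ^ k *ᵥ (M *ᵥ v) := by rw [pow_succ, mulVec_mulVec]
      _ ≤ M ^ k *ᵥ (r • v) := mulVec_le_mulVec_of_nonneg (pow_apply_nonneg hM k) h
      _ = r • (M ^ k *ᵥ v) := mulVec_smul _ _ _
      _ ≤ r • r ^ k • v := smul_le_smul_of_nonneg_left ih hr
      _ = r ^ (k + 1) • v := by rw [smul_smul, pow_succ']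

theorem exists_mulVec_lt_of_pow_mulVec_lt [DecidableEq n] [Semiring R] [PartialOrder R]
    [IsStrictOrderedRing R] {M : Matrix n n R} (hM : ∀ i j, 0 ≤ M i j) {w : n → R} (hw : 0 ≤ w)
    {N : ℕ} (h : ∀ i, (M ^ N *ᵥ w) i < w i) : ∃ v : n → R, 0 ≤ v ∧ ∀ i, (M *ᵥ v) i < v i := by
  set S := ∑ k ∈ range N, M ^ k with hS
  have hS_nonneg : 0 ≤ S *ᵥ w := by
    rw [hS, sum_mulVec]
    exact sum_nonneg fun k _ ↦ mulVec_nonneg (pow_apply_nonneg hM k) hw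
  have telescope : M *ᵥ (S *ᵥ w) + w = M ^ N *ᵥ w + S *ᵥ w := by
    have hgeom : M * S + 1 = M ^ N + S := (geom_sum_succ ..).symm.trans (geom_sum_succ' ..)
    simpa only [add_mulVec, one_mulVec, mulVec_mulVec] using congrArg (· *ᵥ w) hgeom
  refine ⟨S *ᵥ w, hS_nonneg, fun i ↦ lt_of_add_lt_add_right (a := w i) ?_⟩
  calc (M *ᵥ (S *ᵥ w)) i + w i = (M ^ N *ᵥ w) i + (S *ᵥ w) i := congrFun telescope i
    _ < w i + (S *ᵥ w) i := by gcongr; exact h i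
    _ = (S *ᵥ w) i + w i := add_comm _ _

theorem exists_lt_one_le_smul_of_forall_lt {ι K : Type*} [Finite ι] [Semifield K] [LinearOrder K]
    [IsStrictOrderedRing K] {u v : ι → K} (hu : 0 ≤ u) (h : ∀ i, u i < v i) :
    ∃ r : K, 0 ≤ r ∧ r < 1 ∧ u ≤ r • v := by
  have hv i : 0 < v i := (hu i).trans_lt (h i)
  have : Nonempty (Set.Ico (0 : K) 1) := ⟨0, le_rfl, one_pos⟩
  obtain ⟨⟨r, hr₀, hr₁⟩, hr⟩ := Finite.exists_le fun i ↦
    (⟨u i / v i, div_nonneg (hu i) (hv i).le, (div_lt_one (hv i)).2 (h i)⟩ : Set.Ico (0 : K) 1)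
  exact ⟨r, hr₀, hr₁, fun i ↦ (div_le_iff₀ (hv i)).1 (hr i)⟩

end OrderedSemiring

section TopologicallyNilpotent

theorem tendsto_pow_mulVec_of_isTopologicallyNilpotent {n R : Type*} [Fintype n] [DecidableEq n]
    [Semiring R] [TopologicalSpace R] [IsTopologicalSemiring R] {M : Matrix n n R}
    (h : IsTopologicallyNilpotent M) (w : n → R) :
    Tendsto (fun k : ℕ ↦ M ^ k *ᵥ w) atTop (𝓝 0) := by
  have hcont : Continuous fun A : Matrix n n R ↦ A *ᵥ w := by fun_prop
  simpa only [zero_mulVec, Function.comp_def] using (hcont.tendsto 0).comp h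

variable {n K : Type*} [Fintype n] [DecidableEq n] [Field K] [LinearOrder K]
  [IsStrictOrderedRing K] [Archimedean K] [TopologicalSpace K] [OrderTopology K] {M : Matrix n n K}

theorem isTopologicallyNilpotent_of_mulVec_le_smul (hM : ∀ i j, 0 ≤ M i j)
    {v : n → K} (hv : ∀ i, 0 < v i) {r : K} (hr₀ : 0 ≤ r) (hr₁ : r < 1) (h : M *ᵥ v ≤ r • v) :
    IsTopologicallyNilpotent M := by
  refine tendsto_pi_nhds.2 fun i ↦ tendsto_pi_nhds.2 fun j ↦ ?_
  have entry_nonneg k : 0 ≤ (M ^ k) i j := pow_apply_nonneg hM k i j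
  have entry_le k : (M ^ k) i j ≤ r ^ k * (v i / v j) := by
    rw [← mul_div_assoc, le_div_iff₀ (hv j)]
    calc (M ^ k) i j * v j ≤ (M ^ k *ᵥ v) i :=
          single_le_sum (f := fun l ↦ (M ^ k) i l * v l)
            (fun l _ ↦ mul_nonneg (pow_apply_nonneg hM k i l) (hv l).le) (mem_univ j)
      _ ≤ r ^ k * v i := pow_mulVec_le_pow_smul hM hr₀ h k i
  have bound_tendsto : Tendsto (fun k : ℕ ↦ r ^ k * (v i / v j)) atTop (𝓝 0) := by
    simpa only [zero_mul] using
      (tendsto_pow_atTop_nhds_zero_of_lt_one hr₀ hr₁).mul_const (v i / v j)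
  exact tendsto_of_tendsto_of_tendsto_of_le_of_le tendsto_const_nhds bound_tendsto
    entry_nonneg entry_le

theorem isTopologicallyNilpotent_iff_exists_mulVec_lt (hM : ∀ i j, 0 ≤ M i j) :
    IsTopologicallyNilpotent M ↔ ∃ v : n → K, 0 ≤ v ∧ ∀ i, (M *ᵥ v) i < v i := by
  constructor
  · intro h
    have hlim := tendsto_pi_nhds.1 (tendsto_pow_mulVec_of_isTopologicallyNilpotent h 1)
    have hlt : ∀ᶠ k in atTop, ∀ i, (M ^ k *ᵥ 1) i < 1 :=
      eventually_all.2 fun i ↦ (hlim i).eventually_lt_const zero_lt_one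
    obtain ⟨N, hN⟩ := hlt.exists
    exact exists_mulVec_lt_of_pow_mulVec_lt hM zero_le_one hN
  · rintro ⟨v, hv, h⟩
    have hMv : 0 ≤ M *ᵥ v := mulVec_nonneg hM hv
    obtain ⟨r, hr₀, hr₁, hr⟩ := exists_lt_one_le_smul_of_forall_lt hMv h
    exact isTopologicallyNilpotent_of_mulVec_le_smul hM (fun i ↦ (hMv i).trans_lt (h i)) hr₀ hr₁ hr

end TopologicallyNilpotent

theorem exists_mulVec_lt_iff_fin_two {R : Type*} [CommRing R] [LinearOrder R]
    [IsStrictOrderedRing R] {M : Matrix (Fin 2) (Fin 2) R} (hM : ∀ i j, 0 ≤ M i j) :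
    (∃ v : Fin 2 → R, 0 ≤ v ∧ ∀ i, (M *ᵥ v) i < v i) ↔
      M 0 0 < 1 ∧ M 1 1 < 1 ∧ M 0 0 + M 1 1 < 1 + M 0 0 * M 1 1 - M 0 1 * M 1 0 := by
  simp only [Fin.forall_fin_two, mulVec, vec2_dotProduct]
  constructor
  · rintro ⟨v, hv, h₀, h₁⟩
    have h01 : 0 ≤ M 0 1 * v 1 := mul_nonneg (hM 0 1) (hv 1)
    have h10 : 0 ≤ M 1 0 * v 0 := mul_nonneg (hM 1 0) (hv 0)
    have hprod : M 0 1 * v 1 * (M 1 0 * v 0) < (1 - M 0 0) * v 0 * ((1 - M 1 1) * v 1) :=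
      mul_lt_mul'' (by linarith) (by linarith) h01 h10
    have hdet : M 0 1 * M 1 0 < (1 - M 0 0) * (1 - M 1 1) :=
      lt_of_mul_lt_mul_right (a := v 0 * v 1) (by linarith) (mul_nonneg (hv 0) (hv 1))
    exact ⟨lt_of_mul_lt_mul_right (by linarith) (hv 0),
      lt_of_mul_lt_mul_right (by linarith) (hv 1), by linarith⟩
  · rintro ⟨h00, h11, hdet⟩
    have h01 := hM 0 1
    have h10 := hM 1 0
    -- The adjugate of `1 - M` applied to the all-ones vector.
    refine ⟨![1 - M 1 1 + M 0 1, 1 - M 0 0 + M 1 0], ?_, ?_, ?_⟩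
    · simp only [Pi.le_def, Fin.forall_fin_two, Pi.zero_apply, cons_val_zero, cons_val_one]
      constructor <;> linarith
    all_goals
      simp only [cons_val_zero, cons_val_one]
      linarith

theorem convergentToZero_two_by_two_iff_general {K : Type*} [Field K] [LinearOrder K]
    [IsStrictOrderedRing K] [Archimedean K] [TopologicalSpace K] [OrderTopology K]
    {M : Matrix (Fin 2) (Fin 2) K} (hM : ∀ i j, 0 ≤ M i j) :
    IsTopologicallyNilpotent M ↔
      M 0 0 < 1 ∧ M 1 1 < 1 ∧ M 0 0 + M 1 1 < 1 + M 0 0 * M 1 1 - M 0 1 * M 1 0 :=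
  (isTopologicallyNilpotent_iff_exists_mulVec_lt hM).trans (exists_mulVec_lt_iff_fin_two hM)

/-- A nonnegative `2 × 2` matrix `M = [a_ij]` is convergent to zero if and
only if `a11 < 1`, `a22 < 1` and `a11 + a22 < 1 + a11 * a22 - a12 * a21`. -/
theorem convergentToZero_two_by_two_iff (M : Matrix (Fin 2) (Fin 2) ℝ)
    (hM : ∀ i j, 0 ≤ M i j) :
    ConvergentToZero M ↔
      (M 0 0 < 1 ∧ M 1 1 < 1 ∧ M 0 0 + M 1 1 < 1 + M 0 0 * M 1 1 - M 0 1 * M 1 0) :=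
  convergentToZero_two_by_two_iff_general hM
end

section
/- Assume 0 ≤ a11 < 1. Then the function h is convex on (0, ∞); in particular its second derivative satisfies h''(θ) ≥ 0 for all θ > 0. -/
/-- The function `h(θ) = tr M(θ) - 1 - det M(θ)`, with
`h(0) = -(1-a11)(1-a22 T) + a12 a21 T`. -/
noncomputable def hfun (T a11 a12 a21 a22 θ : ℝ) : ℝ :=
  if θ = 0 then -(1 - a11) * (1 - a22 * T) + a12 * a21 * T
  else a11 + a22 * ((1 - Real.exp (-θ * T)) / θ) - 1
    - a11 * a22 * ((1 - Real.exp (-θ * T)) / θ)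
    + a12 * a21 * ((Real.exp (θ * T) - 1) / θ)

/-!
Both quotients in `h` are integrals of exponentials: for `θ ≠ 0`,
`(1 - e^{-θT}) / θ = ∫_{-T}^0 e^{θx} dx` and `(e^{θT} - 1) / θ = ∫_0^T e^{θx} dx`, and the value
`h(0)` is the one these integrals give. Hence `h` is a constant plus the moment-generating function
of the measure with density `(1 - a11) a22` on `(-T, 0]` and `a12 a21` on `(0, T]`. Convexity comes
from that of `exp`, and the second derivative is `∫ x² e^{θx} ≥ 0`.
-/

open MeasureTheory ProbabilityTheory
open scoped NNReal

section MGF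

variable {Ω : Type*} {mΩ : MeasurableSpace Ω} {X : Ω → ℝ} {μ : Measure Ω}

theorem integrableExpSet_eq_univ_of_ae_mem_Icc [IsFiniteMeasure μ] {a b : ℝ}
    (hX : AEMeasurable X μ) (hab : ∀ᵐ ω ∂μ, X ω ∈ Set.Icc a b) :
    integrableExpSet X μ = Set.univ :=
  Set.eq_univ_of_forall fun _ => integrable_exp_mul_of_mem_Icc hX hab

theorem convexOn_mgf : ConvexOn ℝ (integrableExpSet X μ) (mgf X μ) := by
  refine ⟨convex_integrableExpSet, fun s hs t ht a b ha hb hab => ?_⟩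
  have hst : a • s + b • t ∈ integrableExpSet X μ := convex_integrableExpSet hs ht ha hb hab
  have hexp (ω : Ω) : Real.exp ((a • s + b • t) * X ω) ≤
      a * Real.exp (s * X ω) + b * Real.exp (t * X ω) := by
    rw [show (a • s + b • t) * X ω = a • (s * X ω) + b • (t * X ω) by
      simp only [smul_eq_mul]; ring]
    exact convexOn_exp.2 (Set.mem_univ _) (Set.mem_univ _) ha hb hab
  calc mgf X μ (a • s + b • t)
      ≤ ∫ ω, a * Real.exp (s * X ω) + b * Real.exp (t * X ω) ∂μ :=
        integral_mono hst ((hs.const_mul a).add (ht.const_mul b)) hexp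
    _ = a • mgf X μ s + b • mgf X μ t := by
        rw [integral_add (hs.const_mul a) (ht.const_mul b), integral_const_mul,
          integral_const_mul]
        rfl

theorem iteratedDeriv_two_mgf_nonneg {t : ℝ} (ht : t ∈ interior (integrableExpSet X μ)) :
    0 ≤ iteratedDeriv 2 (mgf X μ) t := by
  rw [iteratedDeriv_mgf ht]
  exact integral_nonneg fun ω => mul_nonneg (sq_nonneg (X ω)) (Real.exp_nonneg _)

end MGF

theorem mgf_id_restrict_Ioc {a b t : ℝ} (hab : a ≤ b) (ht : t ≠ 0) :
    mgf id (volume.restrict (Set.Ioc a b)) t = (Real.exp (t * b) - Real.exp (t * a)) / t := by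
  calc mgf id (volume.restrict (Set.Ioc a b)) t
      = ∫ x in a..b, Real.exp (t * x) := (intervalIntegral.integral_of_le hab).symm
    _ = (Real.exp (t * b) - Real.exp (t * a)) / t := by
        rw [intervalIntegral.integral_comp_mul_left Real.exp ht, integral_exp, smul_eq_mul,
          inv_mul_eq_div]

theorem mgf_id_restrict_Ioc_zero {a b : ℝ} (hab : a ≤ b) :
    mgf id (volume.restrict (Set.Ioc a b)) 0 = b - a := by
  rw [mgf_zero', measureReal_restrict_apply_univ, Real.volume_real_Ioc_of_le hab]

/-- The measure on `ℝ` with density `p` on `(-T, 0]`, `q` on `(0, T]` and `0` elsewhere, whose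
moment-generating function is `h` up to an additive constant. -/
noncomputable def twoStepMeasure (T : ℝ) (p q : ℝ≥0) : Measure ℝ :=
  p • volume.restrict (Set.Ioc (-T) 0) + q • volume.restrict (Set.Ioc 0 T)

instance isFiniteMeasure_twoStepMeasure (T : ℝ) (p q : ℝ≥0) :
    IsFiniteMeasure (twoStepMeasure T p q) := by
  unfold twoStepMeasure
  infer_instance

theorem ae_twoStepMeasure_mem_Icc (T : ℝ) (p q : ℝ≥0) :
    ∀ᵐ x ∂twoStepMeasure T p q, x ∈ Set.Icc (-T) T := by
  refine ae_add_measure_iff.2 ⟨Measure.ae_smul_measure ?_ p, Measure.ae_smul_measure ?_ q⟩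
  all_goals
    filter_upwards [ae_restrict_mem measurableSet_Ioc] with x hx
    constructor <;> linarith [hx.1, hx.2]

theorem integrableExpSet_id_twoStepMeasure (T : ℝ) (p q : ℝ≥0) :
    integrableExpSet id (twoStepMeasure T p q) = Set.univ :=
  integrableExpSet_eq_univ_of_ae_mem_Icc aemeasurable_id (ae_twoStepMeasure_mem_Icc T p q)

theorem mgf_id_twoStepMeasure (T : ℝ) (p q : ℝ≥0) (t : ℝ) :
    mgf id (twoStepMeasure T p q) t =
      p * mgf id (volume.restrict (Set.Ioc (-T) 0)) t +
        q * mgf id (volume.restrict (Set.Ioc 0 T)) t := by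
  have hint : Integrable (fun x => Real.exp (t * id x)) (twoStepMeasure T p q) :=
    integrable_exp_mul_of_mem_Icc aemeasurable_id (ae_twoStepMeasure_mem_Icc T p q)
  obtain ⟨hleft, hright⟩ := integrable_add_measure.1 hint
  rw [twoStepMeasure, mgf_add_measure hleft hright]
  exact congrArg₂ (· + ·) (mgf_smul_measure p) (mgf_smul_measure q)

theorem hfun_eq_const_add_mgf {T a11 a12 a21 a22 : ℝ} {p q : ℝ≥0} (hT : 0 ≤ T)
    (hp : p = (1 - a11) * a22) (hq : q = a12 * a21) :
    hfun T a11 a12 a21 a22 = fun θ => a11 - 1 + mgf id (twoStepMeasure T p q) θ := by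
  have hT' : -T ≤ 0 := neg_nonpos.2 hT
  funext θ
  rw [mgf_id_twoStepMeasure, hp, hq]
  rcases eq_or_ne θ 0 with rfl | hθ
  · rw [hfun, if_pos rfl, mgf_id_restrict_Ioc_zero hT', mgf_id_restrict_Ioc_zero hT]
    ring
  · rw [hfun, if_neg hθ, mgf_id_restrict_Ioc hT' hθ, mgf_id_restrict_Ioc hT hθ, mul_zero,
      Real.exp_zero, mul_neg, ← neg_mul]
    ring

theorem hfun_convexOn_general {T a11 a12 a21 a22 : ℝ} (hT : 0 ≤ T)
    (hleft : 0 ≤ (1 - a11) * a22) (hright : 0 ≤ a12 * a21) :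
    ConvexOn ℝ Set.univ (hfun T a11 a12 a21 a22) ∧
      ∀ θ : ℝ, 0 ≤ deriv (deriv (hfun T a11 a12 a21 a22)) θ := by
  obtain ⟨p, hp⟩ : ∃ p : ℝ≥0, (p : ℝ) = (1 - a11) * a22 := CanLift.prf _ hleft
  obtain ⟨q, hq⟩ : ∃ q : ℝ≥0, (q : ℝ) = a12 * a21 := CanLift.prf _ hright
  have hν := integrableExpSet_id_twoStepMeasure T p q
  rw [hfun_eq_const_add_mgf hT hp hq]
  constructor
  · exact (convexOn_const (a11 - 1) convex_univ).add (hν ▸ convexOn_mgf)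
  · intro θ
    have hθ : θ ∈ interior (integrableExpSet id (twoStepMeasure T p q)) := by
      rw [hν, interior_univ]
      exact Set.mem_univ θ
    have hderiv := iteratedDeriv_two_mgf_nonneg hθ
    rw [iteratedDeriv_succ, iteratedDeriv_one] at hderiv
    rwa [deriv_const_add']

/-- If `0 ≤ a11 < 1`, then `h` is convex on `(0, ∞)`; in particular its
second derivative is nonnegative there. -/
theorem hfun_convexOn (T a11 a12 a21 a22 : ℝ)
    (hT : 0 < T) (h11 : 0 ≤ a11) (h12 : 0 ≤ a12) (h21 : 0 ≤ a21) (h22 : 0 ≤ a22)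
    (h11lt : a11 < 1) :
    ConvexOn ℝ (Set.Ioi (0 : ℝ)) (hfun T a11 a12 a21 a22) ∧
      ∀ θ > (0 : ℝ), 0 ≤ deriv (deriv (hfun T a11 a12 a21 a22)) θ := by
  have h := hfun_convexOn_general (a11 := a11) hT.le (mul_nonneg (sub_nonneg.2 h11lt.le) h22)
    (mul_nonneg h12 h21)
  exact ⟨h.1.subset (Set.subset_univ _) (convex_Ioi 0), fun θ _ => h.2 θ⟩
end

section
/- Assume a11 < 1 and τ := a22(1−a11) − a12·a21 > 0. Then the function h̃ is strictly convex on (0, ∞); in particular its second derivative satisfies h̃''(θ) > 0 for all θ > 0. -/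
/-- The function `h̃(θ) = a11 + a22/θ - 1 - a11 a22/θ + a12 a21 (e^{θT}-1)/θ` (for `θ > 0`). -/
noncomputable def htilde (T a11 a12 a21 a22 θ : ℝ) : ℝ :=
  a11 + a22 / θ - 1 - a11 * a22 / θ + a12 * a21 * ((Real.exp (θ * T) - 1) / θ)

/-! Up to an additive constant, `h̃` is the combination of `1/θ` and `(e^{θT} - 1)/θ` with
coefficients `a22 (1 - a11)` and `a12 a21`. Both functions have positive second derivative on
`(0, ∞)`; for the second one this amounts, with `x = θT`, to `e^x (x² - 2x + 2) > 2`, which follows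
from `e^x ≥ 1 + x + x²/2` because `(x² + 2 + 2x)(x² + 2 - 2x) = x⁴ + 4`. -/

/-- The quotient `(e^{θT} - 1)/θ`, which is `∫₀ᵀ e^{θs} ds` for `θ ≠ 0`; it isolates the
exponential part of `htilde`. At `θ = 0` its value is `0` instead of the limit `T`. -/
noncomputable def expQuotient (T θ : ℝ) : ℝ :=
  (Real.exp (θ * T) - 1) / θ

theorem two_lt_exp_mul_sub_one_sq_add_one {x : ℝ} (hx : 0 < x) :
    2 < Real.exp x * ((x - 1) ^ 2 + 1) :=
  calc
    2 < 2 + x ^ 4 / 2 := lt_add_of_pos_right 2 (by positivity)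
    _ = (1 + x + x ^ 2 / 2) * ((x - 1) ^ 2 + 1) := by ring
    _ ≤ Real.exp x * ((x - 1) ^ 2 + 1) := by
      gcongr
      exact Real.quadratic_le_exp_of_nonneg hx.le

section Derivatives

variable (T : ℝ) {θ : ℝ}

theorem hasDerivAt_expQuotient (hθ : θ ≠ 0) :
    HasDerivAt (expQuotient T) ((Real.exp (θ * T) * (θ * T - 1) + 1) / θ ^ 2) θ := by
  have hquot := ((hasDerivAt_mul_const T).exp.sub_const 1).fun_div (hasDerivAt_id' θ) hθ
  exact hquot.congr_deriv (by ring)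

theorem hasDerivAt_deriv_expQuotient (hθ : θ ≠ 0) :
    HasDerivAt (deriv (expQuotient T))
      ((Real.exp (θ * T) * ((θ * T - 1) ^ 2 + 1) - 2) / θ ^ 3) θ := by
  have hlin : HasDerivAt (fun x : ℝ => x * T) T θ := hasDerivAt_mul_const T
  have hquot := ((hlin.exp.fun_mul (hlin.sub_const 1)).add_const 1).fun_div
    (hasDerivAt_pow 2 θ) (pow_ne_zero 2 hθ)
  refine (hquot.congr_deriv ?_).congr_of_eventuallyEq ?_
  · field_simp
    ring
  · filter_upwards [isOpen_ne.mem_nhds hθ] with x hx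
    exact (hasDerivAt_expQuotient T hx).deriv

theorem deriv_deriv_expQuotient_pos {T : ℝ} (hT : 0 < T) (hθ : 0 < θ) :
    0 < deriv (deriv (expQuotient T)) θ := by
  rw [(hasDerivAt_deriv_expQuotient T hθ.ne').deriv]
  exact div_pos (sub_pos.2 (two_lt_exp_mul_sub_one_sq_add_one (mul_pos hθ hT))) (pow_pos hθ 3)

variable (a11 a12 a21 a22 : ℝ)

theorem htilde_eq_add_expQuotient :
    htilde T a11 a12 a21 a22 =
      fun θ => a11 - 1 + a22 * (1 - a11) * θ⁻¹ + a12 * a21 * expQuotient T θ := by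
  funext θ
  simp only [htilde, expQuotient]
  ring

theorem hasDerivAt_htilde (hθ : θ ≠ 0) :
    HasDerivAt (htilde T a11 a12 a21 a22)
      (a22 * (1 - a11) * -(θ ^ 2)⁻¹ + a12 * a21 * deriv (expQuotient T) θ) θ := by
  rw [htilde_eq_add_expQuotient]
  exact (((hasDerivAt_inv hθ).const_mul _).const_add _).fun_add
    ((hasDerivAt_expQuotient T hθ).differentiableAt.hasDerivAt.const_mul _)

theorem deriv_deriv_htilde (hθ : θ ≠ 0) :
    deriv (deriv (htilde T a11 a12 a21 a22)) θ =
      a22 * (1 - a11) * (2 / θ ^ 3) + a12 * a21 * deriv (deriv (expQuotient T)) θ := by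
  have hderiv : deriv (htilde T a11 a12 a21 a22) =ᶠ[nhds θ] fun x =>
      a22 * (1 - a11) * -(x ^ 2)⁻¹ + a12 * a21 * deriv (expQuotient T) x := by
    filter_upwards [isOpen_ne.mem_nhds hθ] with x hx
    exact (hasDerivAt_htilde T a11 a12 a21 a22 hx).deriv
  have hinv : HasDerivAt (fun x : ℝ => -(x ^ 2)⁻¹) (2 / θ ^ 3) θ := by
    refine ((hasDerivAt_pow 2 θ).fun_inv (pow_ne_zero 2 hθ)).fun_neg.congr_deriv ?_
    field_simp
    ring
  have hquot := (hasDerivAt_deriv_expQuotient T hθ).differentiableAt.hasDerivAt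
  rw [hderiv.deriv_eq]
  exact ((hinv.const_mul _).fun_add (hquot.const_mul _)).deriv

end Derivatives

theorem deriv_deriv_htilde_pos {T a11 a12 a21 a22 θ : ℝ} (hT : 0 < T)
    (hexp : 0 ≤ a12 * a21) (hinv : 0 ≤ a22 * (1 - a11))
    (hsum : 0 < a22 * (1 - a11) + a12 * a21) (hθ : 0 < θ) :
    0 < deriv (deriv (htilde T a11 a12 a21 a22)) θ := by
  have hquot := deriv_deriv_expQuotient_pos hT hθ
  rw [deriv_deriv_htilde T a11 a12 a21 a22 hθ.ne']
  rcases hexp.eq_or_lt with hzero | hpos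
  · rw [← hzero, add_zero] at hsum
    positivity
  · positivity

theorem htilde_strictConvexOn_general {T a11 a12 a21 a22 : ℝ} (hT : 0 < T)
    (hexp : 0 ≤ a12 * a21) (hinv : 0 ≤ a22 * (1 - a11))
    (hsum : 0 < a22 * (1 - a11) + a12 * a21) :
    StrictConvexOn ℝ (Set.Ioi (0 : ℝ)) (htilde T a11 a12 a21 a22) ∧
      ∀ θ > (0 : ℝ), 0 < deriv (deriv (htilde T a11 a12 a21 a22)) θ := by
  have hcont : ContinuousOn (htilde T a11 a12 a21 a22) (Set.Ioi 0) :=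
    HasDerivAt.continuousOn fun θ hθ => hasDerivAt_htilde T a11 a12 a21 a22 (ne_of_gt hθ)
  have hpos : ∀ θ > (0 : ℝ), 0 < deriv (deriv (htilde T a11 a12 a21 a22)) θ :=
    fun θ => deriv_deriv_htilde_pos hT hexp hinv hsum
  exact ⟨strictConvexOn_of_deriv2_pos' (convex_Ioi 0) hcont hpos, hpos⟩

/-- If `a11 < 1` and `τ := a22 (1 - a11) - a12 a21 > 0`, then `h̃` is
strictly convex on `(0, ∞)`; in particular its second derivative is positive there. -/
theorem htilde_strictConvexOn (T a11 a12 a21 a22 : ℝ)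
    (hT : 0 < T) (h11 : 0 ≤ a11) (h12 : 0 ≤ a12) (h21 : 0 ≤ a21) (h22 : 0 ≤ a22)
    (h11lt : a11 < 1) (hτ : 0 < a22 * (1 - a11) - a12 * a21) :
    StrictConvexOn ℝ (Set.Ioi (0 : ℝ)) (htilde T a11 a12 a21 a22) ∧
      ∀ θ > (0 : ℝ), 0 < deriv (deriv (htilde T a11 a12 a21 a22)) θ := by
  have hexp : 0 ≤ a12 * a21 := mul_nonneg h12 h21
  exact htilde_strictConvexOn_general hT hexp (by linarith) (by linarith)
end

section
/- Assume a11 < 1 and let θ > 0. Then the matrix M̃(θ) is convergent to zero if and only if h̃(θ) < 0. -/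
open Filter

/-- The matrix `M̃(θ)` for `θ > 0`: rows `(a11, a12 (e^{θT}-1)/θ)` and `(a21, a22/θ)`. -/
noncomputable def Mtilde (T a11 a12 a21 a22 θ : ℝ) : Matrix (Fin 2) (Fin 2) ℝ :=
  !![a11, a12 * ((Real.exp (θ * T) - 1) / θ);
     a21, a22 / θ]

/-! Both directions rest on the identity `(1 - M) * ∑ i < k, M ^ i = 1 - M ^ k`. If `M ^ k → 0`,
it shows that `det (1 - M) ≠ 0`; the same holds for `t • M` with `0 ≤ t ≤ 1`, so `det (1 - t • M)`
keeps the sign it has at `t = 0`. Conversely, if `M ≥ 0` entrywise and `1 - M` has an inverse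
`N ≥ 0`, the partial sums `∑ i < k, M ^ i = N - M ^ k * N` are bounded by `N`, so the geometric
series converges and its terms tend to zero. For 2 × 2 matrices the adjugate formula makes `N ≥ 0`
explicit, and `h̃(θ) = -det (1 - M̃(θ))`. -/

open Matrix Topology

lemma isTopologicallyNilpotent_smul {R A : Type*} [MonoidWithZero R] [MonoidWithZero A]
    [MulActionWithZero R A] [IsScalarTower R A A] [SMulCommClass R A A] [TopologicalSpace R]
    [TopologicalSpace A] [ContinuousSMul R A] {t : R} {a : A} (ht : IsTopologicallyNilpotent t)
    (ha : IsTopologicallyNilpotent a) : IsTopologicallyNilpotent (t • a) := by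
  simpa only [IsTopologicallyNilpotent, smul_pow, smul_zero] using Tendsto.smul ht ha

lemma geom_sum_eq_sub_pow_mul {R : Type*} [Ring R] {a b : R} (hab : (1 - a) * b = 1) (k : ℕ) :
    ∑ m ∈ Finset.range k, a ^ m = b - a ^ k * b := calc
  ∑ m ∈ Finset.range k, a ^ m = (∑ m ∈ Finset.range k, a ^ m) * (1 - a) * b := by
    rw [mul_assoc, hab, mul_one]
  _ = b - a ^ k * b := by rw [geom_sum_mul_neg, sub_mul, one_mul]

section

variable {n : Type*} [Fintype n] [DecidableEq n]

lemma det_one_sub_ne_zero_of_isTopologicallyNilpotent {R : Type*} [CommRing R] [Nontrivial R]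
    [TopologicalSpace R] [IsTopologicalRing R] [T1Space R] {M : Matrix n n R}
    (hM : IsTopologicallyNilpotent M) : (1 - M).det ≠ 0 := by
  have hlim : Tendsto (fun k ↦ (1 - M ^ k).det) atTop (𝓝 1) := by
    have hcont : Continuous fun A : Matrix n n R ↦ (1 - A).det := by fun_prop
    simpa [Function.comp_def] using (hcont.tendsto 0).comp hM
  obtain ⟨k, hk⟩ := (hlim.eventually_ne one_ne_zero).exists
  rw [← mul_neg_geom_sum, det_mul] at hk
  exact left_ne_zero_of_mul hk

variable {M : Matrix n n ℝ}

lemma det_one_sub_pos_of_isTopologicallyNilpotent (hM : IsTopologicallyNilpotent M) :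
    0 < (1 - M).det := by
  have hne : ∀ t ∈ Set.Icc (0 : ℝ) 1, (1 - t • M).det ≠ 0 := fun t ⟨ht0, ht1⟩ ↦ by
    apply det_one_sub_ne_zero_of_isTopologicallyNilpotent
    rcases ht1.eq_or_lt with rfl | ht1
    · rwa [one_smul]
    · exact isTopologicallyNilpotent_smul (tendsto_pow_atTop_nhds_zero_of_lt_one ht0 ht1) hM
  have hcont : Continuous fun t : ℝ ↦ (1 - t • M).det := by fun_prop
  by_contra! hnonpos
  obtain ⟨t, ht, hzero⟩ := intermediate_value_Icc' zero_le_one hcont.continuousOn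
    (show (0 : ℝ) ∈ Set.Icc _ _ by simpa using hnonpos)
  exact hne t ht hzero

lemma isTopologicallyNilpotent_of_one_sub_mul_eq_one_of_nonneg {N : Matrix n n ℝ}
    (hM : ∀ i j, 0 ≤ M i j) (hN : ∀ i j, 0 ≤ N i j) (hMN : (1 - M) * N = 1) :
    IsTopologicallyNilpotent M := by
  have hbound (i j : n) (k : ℕ) : ∑ m ∈ Finset.range k, (M ^ m) i j ≤ N i j := by
    rw [← Matrix.sum_apply, geom_sum_eq_sub_pow_mul hMN, Matrix.sub_apply, mul_apply]
    exact sub_le_self _ <| Finset.sum_nonneg fun l _ ↦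
      mul_nonneg (pow_apply_nonneg hM k i l) (hN l j)
  exact tendsto_pi_nhds.2 fun i ↦ tendsto_pi_nhds.2 fun j ↦
    (summable_of_sum_range_le (fun k ↦ pow_apply_nonneg hM k i j) (hbound i j)).tendsto_atTop_zero

lemma isTopologicallyNilpotent_of_adjugate_one_sub_nonneg (hM : ∀ i j, 0 ≤ M i j)
    (hadj : ∀ i j, 0 ≤ (1 - M).adjugate i j) (hdet : 0 < (1 - M).det) :
    IsTopologicallyNilpotent M :=
  isTopologicallyNilpotent_of_one_sub_mul_eq_one_of_nonneg
    (N := (1 - M).det⁻¹ • (1 - M).adjugate) hM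
    (fun i j ↦ mul_nonneg (inv_nonneg.2 hdet.le) (hadj i j))
    (by rw [mul_smul_comm, mul_adjugate, inv_smul_smul₀ hdet.ne'])

end

lemma det_one_sub_fin_two {R : Type*} [CommRing R] (M : Matrix (Fin 2) (Fin 2) R) :
    (1 - M).det = (1 - M 0 0) * (1 - M 1 1) - M 0 1 * M 1 0 := by
  simp [det_fin_two]

lemma isTopologicallyNilpotent_iff_det_one_sub_pos_fin_two {M : Matrix (Fin 2) (Fin 2) ℝ}
    (hM : ∀ i j, 0 ≤ M i j) (h00 : M 0 0 < 1) :
    IsTopologicallyNilpotent M ↔ 0 < (1 - M).det := by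
  refine ⟨det_one_sub_pos_of_isTopologicallyNilpotent, fun hdet ↦ ?_⟩
  have h11 : M 1 1 < 1 := by
    have hprod : 0 < (1 - M 0 0) * (1 - M 1 1) :=
      (mul_nonneg (hM 0 1) (hM 1 0)).trans_lt (sub_pos.1 (det_one_sub_fin_two M ▸ hdet))
    exact sub_pos.1 (pos_of_mul_pos_right hprod (sub_pos.2 h00).le)
  refine isTopologicallyNilpotent_of_adjugate_one_sub_nonneg hM ?_ hdet
  simp [adjugate_fin_two, Fin.forall_fin_two, hM, h00.le, h11.le]

lemma mtilde_nonneg {T a11 a12 a21 a22 θ : ℝ} (hT : 0 ≤ T) (h11 : 0 ≤ a11) (h12 : 0 ≤ a12)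
    (h21 : 0 ≤ a21) (h22 : 0 ≤ a22) (hθ : 0 ≤ θ) :
    ∀ i j, 0 ≤ Mtilde T a11 a12 a21 a22 θ i j := by
  have hexp : 0 ≤ Real.exp (θ * T) - 1 := sub_nonneg.2 (Real.one_le_exp (mul_nonneg hθ hT))
  have hupper : 0 ≤ a12 * ((Real.exp (θ * T) - 1) / θ) := mul_nonneg h12 (div_nonneg hexp hθ)
  simp [Mtilde, Fin.forall_fin_two, h11, hupper, h21, div_nonneg h22 hθ]

lemma convergentToZero_iff_isTopologicallyNilpotent {n : ℕ} {M : Matrix (Fin n) (Fin n) ℝ} :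
    ConvergentToZero M ↔ IsTopologicallyNilpotent M :=
  Iff.rfl

lemma htilde_eq_neg_det_one_sub_mtilde (T a11 a12 a21 a22 θ : ℝ) :
    htilde T a11 a12 a21 a22 θ = -(1 - Mtilde T a11 a12 a21 a22 θ).det := by
  simp only [htilde, Mtilde, det_one_sub_fin_two, of_apply, cons_val', cons_val_zero, cons_val_one,
    cons_val_fin_one]
  ring

/-- If `a11 < 1` and `θ > 0`, then `M̃(θ)` is convergent to zero if and
only if `h̃(θ) < 0`. -/
theorem mtilde_convergentToZero_iff_htilde_neg (T a11 a12 a21 a22 θ : ℝ)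
    (hT : 0 < T) (h11 : 0 ≤ a11) (h12 : 0 ≤ a12) (h21 : 0 ≤ a21) (h22 : 0 ≤ a22)
    (h11lt : a11 < 1) (hθ : 0 < θ) :
    ConvergentToZero (Mtilde T a11 a12 a21 a22 θ) ↔ htilde T a11 a12 a21 a22 θ < 0 := by
  have hnonneg := mtilde_nonneg hT.le h11 h12 h21 h22 hθ.le
  rw [convergentToZero_iff_isTopologicallyNilpotent, htilde_eq_neg_det_one_sub_mtilde, neg_lt_zero]
  exact isTopologicallyNilpotent_iff_det_one_sub_pos_fin_two hnonneg h11lt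
end

section
/- (Avramescu's fixed point theorem.) Let D₁ be a nonempty closed convex subset of a normed space Y, let (D₂, d) be a nonempty complete metric space, and let N₁ : D₁ × D₂ → D₁ and N₂ : D₁ × D₂ → D₂ be continuous mappings. Assume that (i) the image N₁(D₁ × D₂) is a relatively compact subset of Y, and (ii) there is a constant L ∈ [0, 1) such that d(N₂(x, y), N₂(x, ȳ)) ≤ L·d(y, ȳ) for all x ∈ D₁ and all y, ȳ ∈ D₂. Then there exists (x, y) ∈ D₁ × D₂ such that N₁(x, y) = x and N₂(x, y) = y. -/
open Set Metric MeasureTheory Polynomial Filter Topology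
open scoped NNReal

/-!
For each `x ∈ D₁` the contraction `N₂ (x, ·)` has a unique fixed point `S x`, which depends
continuously on `x`, and a fixed point of `x ↦ N₁ (x, S x)` is what is wanted. This map has
relatively compact range, so the Schauder–Tychonoff theorem applies: Schauder projections onto
finite-dimensional simplices reduce it to Brouwer's theorem.

Brouwer's theorem comes from the nonexistence of a `C¹` retraction `r` of a ball onto its
sphere, which is proved by computing volumes, following Milnor and Rogers. Put `g = r - id`. For
small `t` the map `id + t • g` is a bijection of the ball onto itself, so `det (1 + t • g')`
integrates to the volume of the ball. The integral is a polynomial in `t`, so it equals the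
volume for `t = 1` as well. But `1 + g' = r'` is nowhere invertible because `‖r‖` is constant.
-/

theorem nonempty_inter_frontier_of_isPreconnected {X : Type*} [TopologicalSpace X] {s t : Set X}
    (ht : IsPreconnected t) (hs : (t ∩ s).Nonempty) (hsc : (t ∩ sᶜ).Nonempty) :
    (t ∩ frontier s).Nonempty := by
  rw [frontier_eq_closure_inter_closure]
  exact isPreconnected_closed_iff.1 ht _ _ isClosed_closure isClosed_closure
    (fun x _ => (em (x ∈ s)).imp (subset_closure ·) (subset_closure ·))
    (hs.mono (inter_subset_inter_right _ subset_closure))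
    (hsc.mono (inter_subset_inter_right _ subset_closure))

section NormedSpace

variable {E : Type*} [NormedAddCommGroup E]

theorem lipschitzWith_indicator_of_eqOn_frontier_zero [NormedSpace ℝ E] {F : Type*}
    [SeminormedAddCommGroup F] {K : ℝ≥0} {s : Set E} {g : E → F} (hs : IsClosed s)
    (hg : LipschitzOnWith K g s) (h0 : EqOn g 0 (frontier s)) :
    LipschitzWith K (s.indicator g) := by
  have norm_le_of_notMem {x y : E} (hx : x ∈ s) (hy : y ∉ s) : ‖g x‖ ≤ K * dist x y := by
    obtain ⟨z, hz, hzs⟩ := nonempty_inter_frontier_of_isPreconnected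
      (convex_segment x y).isPreconnected ⟨x, left_mem_segment ℝ x y, hx⟩
      ⟨y, right_mem_segment ℝ x y, hy⟩
    calc ‖g x‖ = dist (g x) (g z) := by rw [h0 hzs, Pi.zero_apply, dist_zero_right]
      _ ≤ K * dist x z := hg.dist_le_mul x hx z (hs.frontier_subset hzs)
      _ ≤ K * dist x y := by
        gcongr
        exact (le_add_of_nonneg_right dist_nonneg).trans_eq (dist_add_dist_of_mem_segment hz)
  refine LipschitzWith.of_dist_le_mul fun x y => ?_
  by_cases hx : x ∈ s <;> by_cases hy : y ∈ s
  · simpa only [indicator_of_mem, hx, hy] using hg.dist_le_mul x hx y hy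
  · simpa [hx, hy] using norm_le_of_notMem hx hy
  · simpa [hx, hy, dist_comm x] using norm_le_of_notMem hy hx
  · simp only [indicator_of_notMem, hx, hy, not_false_eq_true, dist_self]
    positivity

theorem bijective_id_add_of_lipschitzWith [CompleteSpace E] {K : ℝ≥0} (hK : K < 1) {g : E → E}
    (hg : LipschitzWith K g) : Function.Bijective fun x => x + g x := by
  refine ⟨(AntilipschitzWith.id.add_lipschitzWith hg (by simpa using hK)).injective, fun y => ?_⟩
  have hcontr : ContractingWith K fun x => y - g x :=
    ⟨hK, LipschitzWith.of_dist_le_mul fun a b => by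
      simpa only [dist_sub_left] using hg.dist_le_mul a b⟩
  exact ⟨hcontr.fixedPoint, (sub_eq_iff_eq_add.1 hcontr.fixedPoint_isFixedPt).symm⟩

theorem image_id_add_eq_of_lipschitzWith [CompleteSpace E] {K : ℝ≥0} (hK : K < 1) {g : E → E}
    (hg : LipschitzWith K g) {s : Set E} (h0 : EqOn g 0 sᶜ) : (fun x => x + g x) '' s = s := by
  have himage : (fun x => x + g x) '' sᶜ = sᶜ :=
    (image_congr fun x hx => by simp [h0 hx]).trans (image_id sᶜ)
  rwa [image_compl_eq (bijective_id_add_of_lipschitzWith hK hg), compl_inj_iff] at himage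

end NormedSpace

theorem integral_eval_eq_of_infinite {α 𝕜 : Type*} [RCLike 𝕜] [MeasurableSpace α] {μ : Measure α}
    {n : ℕ} {P : α → 𝕜[X]} (hdeg : ∀ x, (P x).natDegree ≤ n) {s : Set 𝕜} (hs : s.Infinite) {c : 𝕜}
    (hint : ∀ t ∈ s, Integrable (fun x => (P x).eval t) μ)
    (hc : ∀ t ∈ s, ∫ x, (P x).eval t ∂μ = c) (t : 𝕜) : ∫ x, (P x).eval t ∂μ = c := by
  -- Interpolating at points of `s` avoids asking for integrability of the coefficients of `P`.
  obtain ⟨v, hvs, hcard⟩ := hs.exists_subset_card_eq (n + 1)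
  let weight (a : 𝕜) : 𝕜 := (Lagrange.basis v id a).eval t
  have hweight : ∑ a ∈ v, weight a = 1 := by
    rw [← eval_finsetSum, Lagrange.sum_basis (injOn_id _) (Finset.card_pos.1 (by lia)), eval_one]
  have heval (x : α) : (P x).eval t = ∑ a ∈ v, weight a * (P x).eval a := by
    have hlt : (P x).degree < v.card :=
      degree_le_natDegree.trans_lt (by rw [hcard]; exact_mod_cast Nat.lt_succ_of_le (hdeg x))
    conv_lhs => rw [Lagrange.eq_interpolate (injOn_id _) hlt, Lagrange.interpolate_apply]
    simp [weight, eval_finsetSum, mul_comm]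
  calc ∫ x, (P x).eval t ∂μ = ∫ x, ∑ a ∈ v, weight a * (P x).eval a ∂μ := by simp only [heval]
    _ = ∑ a ∈ v, weight a * ∫ x, (P x).eval a ∂μ := by
      rw [integral_finsetSum _ fun a ha => (hint a (hvs ha)).const_mul _]
      simp only [integral_const_mul]
    _ = ∑ a ∈ v, weight a * c := Finset.sum_congr rfl fun a ha => by rw [hc a (hvs ha)]
    _ = c := by rw [← Finset.sum_mul, hweight, one_mul]

theorem eval_det_X_smul_add_C {R n : Type*} [CommRing R] [Fintype n] [DecidableEq n]
    (A B : Matrix n n R) (t : R) :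
    ((X : R[X]) • A.map C + B.map C).det.eval t = (t • A + B).det := by
  rw [← coe_evalRingHom, RingHom.map_det]
  congr 1
  ext i j
  simp only [RingHom.mapMatrix_apply, Matrix.map_apply, Matrix.add_apply, Matrix.smul_apply,
    smul_eq_mul, coe_evalRingHom, eval_add, eval_mul, eval_X, eval_C]

theorem exists_polynomial_eval_eq_det_one_add_smul {R M : Type*} [CommRing R] [Nontrivial R]
    [AddCommGroup M] [Module R M] [Module.Free R M] [Module.Finite R M] (A : M →ₗ[R] M) :
    ∃ p : R[X], p.natDegree ≤ Module.finrank R M ∧ ∀ t, p.eval t = LinearMap.det (1 + t • A) := by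
  let b := Module.finBasis R M
  refine ⟨_, (natDegree_det_X_add_C_le (LinearMap.toMatrix b b A) 1).trans_eq (Fintype.card_fin _),
    fun t => ?_⟩
  rw [eval_det_X_smul_add_C, ← LinearMap.det_toMatrix b, map_add, map_smul, LinearMap.toMatrix_one,
    add_comm]

section Jacobian

variable {E : Type*} [NormedAddCommGroup E] [NormedSpace ℝ E] [FiniteDimensional ℝ E]

theorem det_one_add_pos_of_norm_lt_one {A : E →L[ℝ] E} (hA : ‖A‖ < 1) :
    0 < (1 + A : E →L[ℝ] E).det := by
  have hne : ∀ B ∈ ball (0 : E →L[ℝ] E) 1, (1 + B).det ≠ 0 := fun B hB => by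
    have := FiniteDimensional.complete ℝ E
    have hunit : IsUnit (1 + B) := by
      simpa using isUnit_one_sub_of_norm_lt_one (x := -B) (by simpa using hB)
    have hunit' := hunit.map (ContinuousLinearMap.toLinearMapRingHom (R₁ := ℝ) (M₁ := E))
    exact (LinearMap.isUnit_det _ hunit').ne_zero
  have hcont : Continuous fun B : E →L[ℝ] E => (1 + B).det :=
    ContinuousLinearMap.continuous_det.comp (continuous_const.add continuous_id)
  by_contra! hnonpos
  obtain ⟨B, hB, hdet⟩ := (convex_ball (0 : E →L[ℝ] E) 1).isPreconnected.intermediate_value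
    (mem_ball_zero_iff.2 hA) (mem_ball_self one_pos) hcont.continuousOn
    (show (0 : ℝ) ∈ Icc _ _ from ⟨hnonpos, by simp [ContinuousLinearMap.det]⟩)
  exact hne B hB hdet

variable [MeasurableSpace E] [BorelSpace E] (μ : Measure E) [μ.IsAddHaarMeasure]
  {K : ℝ≥0} {s : Set E} {g : E → E} {g' : E → E →L[ℝ] E}

theorem integrableOn_and_setIntegral_det_one_add_fderiv_of_lt_one (hs : IsOpen s) (hμs : μ s ≠ ⊤)
    (hK : K < 1) (hg : LipschitzWith K g) (h0 : EqOn g 0 sᶜ)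
    (hg' : ∀ x ∈ s, HasFDerivAt g (g' x) x) :
    IntegrableOn (fun x => (1 + g' x).det) s μ ∧ ∫ x in s, (1 + g' x).det ∂μ = μ.real s := by
  have := FiniteDimensional.complete ℝ E
  have hderiv : ∀ x ∈ s, HasFDerivWithinAt (fun x => x + g x) (1 + g' x) s x := fun x hx =>
    ((hasFDerivAt_id x).add (hg' x hx)).hasFDerivWithinAt
  have hinj : InjOn (fun x => x + g x) s := (bijective_id_add_of_lipschitzWith hK hg).1.injOn
  have himage := image_id_add_eq_of_lipschitzWith hK hg h0
  have habs : EqOn (fun x => |(1 + g' x).det| • (1 : ℝ)) (fun x => (1 + g' x).det) s :=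
    fun x hx => by
      have hlt : ‖g' x‖ < 1 := ((hg' x hx).le_of_lipschitz hg).trans_lt hK
      simp [abs_of_pos (det_one_add_pos_of_norm_lt_one hlt)]
  constructor
  · rw [← integrableOn_congr_fun habs hs.measurableSet]
    refine (integrableOn_image_iff_integrableOn_abs_det_fderiv_smul μ hs.measurableSet hderiv hinj
      fun _ => (1 : ℝ)).1 ?_
    rw [himage]
    exact integrableOn_const hμs
  · rw [← setIntegral_congr_fun hs.measurableSet habs]
    refine (integral_image_eq_integral_abs_det_fderiv_smul μ hs.measurableSet hderiv hinj
      fun _ => (1 : ℝ)).symm.trans ?_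
    simp [himage]

theorem setIntegral_det_one_add_fderiv (hs : IsOpen s) (hμs : μ s ≠ ⊤) (hg : LipschitzWith K g)
    (h0 : EqOn g 0 sᶜ) (hg' : ∀ x ∈ s, HasFDerivAt g (g' x) x) :
    ∫ x in s, (1 + g' x).det ∂μ = μ.real s := by
  choose P hdeg hP using fun x => exists_polynomial_eval_eq_det_one_add_smul (g' x : E →ₗ[ℝ] E)
  have hP' (x : E) (t : ℝ) : (P x).eval t = (1 + t • g' x).det := hP x t
  have hinfinite : {t : ℝ | ‖t‖₊ * K < 1}.Infinite :=
    infinite_of_mem_nhds 0 ((isOpen_lt (by fun_prop) continuous_const).mem_nhds (by simp))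
  have hsmall (t : ℝ) (ht : ‖t‖₊ * K < 1) :=
    integrableOn_and_setIntegral_det_one_add_fderiv_of_lt_one μ hs hμs ht
      ((lipschitzWith_smul t).comp hg) (g' := fun x => t • g' x)
      (fun x hx => by simp [h0 hx]) (fun x hx => (hg' x hx).const_smul t)
  have hone := integral_eval_eq_of_infinite (μ := μ.restrict s) hdeg hinfinite
    (fun t ht => by simpa only [hP', IntegrableOn] using (hsmall t ht).1)
    (fun t ht => by simpa only [hP'] using (hsmall t ht).2) 1
  simpa only [hP', one_smul] using hone

end Jacobian

section Brouwer

section InnerProductSpace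

variable {E : Type*} [NormedAddCommGroup E] [InnerProductSpace ℝ E]

theorem exists_lipschitzWith_one_retraction {K : Set E} (hne : K.Nonempty) (hK : IsComplete K)
    (hconv : Convex ℝ K) :
    ∃ P : E → E, LipschitzWith 1 P ∧ (∀ x, P x ∈ K) ∧ ∀ x ∈ K, P x = x := by
  choose P hPK hmin using exists_norm_eq_iInf_of_complete_convex hne hK hconv
  have hinner (x y : E) (hy : y ∈ K) : inner ℝ (x - P x) (y - P x) ≤ 0 :=
    (norm_eq_iInf_iff_real_inner_le_zero hconv (hPK x)).1 (hmin x) y hy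
  refine ⟨P, LipschitzWith.of_dist_le_mul fun x y => ?_, hPK, fun x hx => ?_⟩
  · have hsq : ‖P x - P y‖ ^ 2 ≤ ‖x - y‖ * ‖P x - P y‖ := by
      calc ‖P x - P y‖ ^ 2
          = inner ℝ (x - y) (P x - P y) + inner ℝ (x - P x) (P y - P x)
            + inner ℝ (y - P y) (P x - P y) := by
            rw [← real_inner_self_eq_norm_sq]
            simp only [inner_sub_left, inner_sub_right]
            ring
        _ ≤ inner ℝ (x - y) (P x - P y) := by linarith [hinner x _ (hPK y), hinner y _ (hPK x)]
        _ ≤ ‖x - y‖ * ‖P x - P y‖ := real_inner_le_norm _ _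
    rw [NNReal.coe_one, one_mul, dist_eq_norm, dist_eq_norm]
    by_contra! hlt
    nlinarith [norm_nonneg (x - y)]
  · exact (sub_eq_zero.1 (real_inner_self_nonpos.1 (hinner x x hx))).symm

variable [FiniteDimensional ℝ E]

theorem det_fderiv_eq_zero_of_eventually_norm_eq {r : E → E} {r' : E →L[ℝ] E} {x : E} {R : ℝ}
    (hr : HasFDerivAt r r' x) (hR : R ≠ 0) (hnorm : ∀ᶠ y in 𝓝 x, ‖r y‖ = R) : r'.det = 0 := by
  by_contra hdet
  obtain ⟨v, hv⟩ : ∃ v, r' v = r x := (r'.toContinuousLinearEquivOfDetNeZero hdet).surjective (r x)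
  have hconst : HasFDerivAt (fun y => ‖r y‖ ^ 2) (0 : E →L[ℝ] ℝ) x :=
    (hasFDerivAt_const (R ^ 2) x).congr_of_eventuallyEq (hnorm.mono fun y hy => by simp only [hy])
  have hzero := DFunLike.congr_fun (hconst.unique hr.norm_sq) v
  simp [hv, hnorm.self_of_nhds, hR] at hzero

theorem not_eqOn_id_sphere_of_contDiffOn {R : ℝ} (hR : 0 < R) {r : E → E}
    (hr : ContDiffOn ℝ 1 r (closedBall 0 R)) (hmaps : MapsTo r (ball 0 R) (sphere 0 R)) :
    ¬ EqOn r id (sphere 0 R) := by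
  intro hid
  borelize E
  let μ : Measure E := Measure.addHaar
  let g := (closedBall (0 : E) R).indicator (r - id)
  have hnhds {x : E} (hx : x ∈ ball 0 R) : ball (0 : E) R ∈ 𝓝 x := isOpen_ball.mem_nhds hx
  have hderiv : ∀ x ∈ ball (0 : E) R, HasFDerivAt r (fderiv ℝ r x) x := fun x hx =>
    ((hr.differentiableOn one_ne_zero).differentiableAt
      (mem_of_superset (hnhds hx) ball_subset_closedBall)).hasFDerivAt
  obtain ⟨K, hK⟩ := (hr.sub contDiffOn_id).exists_lipschitzOnWith one_ne_zero
    (convex_closedBall 0 R) (isCompact_closedBall 0 R)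
  have hg : LipschitzWith K g :=
    lipschitzWith_indicator_of_eqOn_frontier_zero isClosed_closedBall hK fun x hx => by
      rw [frontier_closedBall _ hR.ne'] at hx
      simp [hid hx]
  have hg0 : EqOn g 0 (ball 0 R)ᶜ := fun x hx => by
    by_cases hx' : x ∈ closedBall (0 : E) R
    · have hxs : x ∈ sphere (0 : E) R := closedBall_sdiff_ball (x := (0 : E)) ▸ ⟨hx', hx⟩
      simp [g, hid hxs]
    · simp [g, hx']
  have hg' : ∀ x ∈ ball (0 : E) R, HasFDerivAt g (fderiv ℝ r x - 1) x := fun x hx =>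
    ((hderiv x hx).sub (hasFDerivAt_id x)).congr_of_eventuallyEq <| by
      filter_upwards [hnhds hx] with y hy
      exact indicator_of_mem (ball_subset_closedBall hy) _
  have hdet : ∀ x ∈ ball (0 : E) R, (1 + (fderiv ℝ r x - 1)).det = 0 := fun x hx => by
    rw [add_sub_cancel]
    exact det_fderiv_eq_zero_of_eventually_norm_eq (hderiv x hx) hR.ne'
      ((eventually_mem_set.2 (hnhds hx)).mono fun y hy => by simpa using hmaps hy)
  have hvol := setIntegral_det_one_add_fderiv μ isOpen_ball measure_ball_lt_top.ne hg hg0 hg'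
  rw [setIntegral_congr_fun isOpen_ball.measurableSet hdet, integral_zero] at hvol
  exact (ENNReal.toReal_pos (measure_ball_pos μ 0 hR).ne' measure_ball_lt_top.ne).ne hvol

theorem exists_isFixedPt_of_contDiff_of_norm_le {C : ℝ} {f : E → E} (hf : ContDiff ℝ 1 f)
    (hC : ∀ x, ‖f x‖ ≤ C) : ∃ x, Function.IsFixedPt f x := by
  by_contra! hfix
  have hC0 : 0 ≤ C := (norm_nonneg _).trans (hC 0)
  let χ : ContDiffBump (0 : E) := ⟨C + 1, C + 2, by linarith, by linarith⟩
  -- `φ` vanishes only at fixed points of `f` and is the identity on the sphere of radius `C + 2`.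
  let φ : E → E := fun x => x - χ x • f x
  have hφ : ContDiff ℝ 1 φ := contDiff_id.sub (χ.contDiff.smul hf)
  have hφ0 (x : E) : φ x ≠ 0 := fun hx => by
    have hxf : x = χ x • f x := sub_eq_zero.1 hx
    have hxC : ‖x‖ ≤ C := by
      calc ‖x‖ = χ x * ‖f x‖ := by
            conv_lhs => rw [hxf, norm_smul, Real.norm_of_nonneg χ.nonneg]
        _ ≤ 1 * C := mul_le_mul χ.le_one (hC x) (norm_nonneg _) zero_le_one
        _ = C := one_mul C
    have hχ : χ x = 1 := χ.one_of_mem_closedBall (mem_closedBall_zero_iff.2 (by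
      change ‖x‖ ≤ C + 1
      linarith))
    exact hfix x (by rw [Function.IsFixedPt, ← one_smul ℝ (f x), ← hχ, ← hxf])
  have hR : 0 < C + 2 := by linarith
  have hr : ContDiff ℝ 1 fun x => ((C + 2) / ‖φ x‖) • φ x :=
    (contDiff_const.div (hφ.norm ℝ hφ0) fun x => norm_ne_zero_iff.2 (hφ0 x)).smul hφ
  refine not_eqOn_id_sphere_of_contDiffOn hR hr.contDiffOn (fun x _ => ?_) fun x hx => ?_
  · rw [mem_sphere_zero_iff_norm, norm_smul, norm_div, norm_norm, Real.norm_of_nonneg hR.le,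
      div_mul_cancel₀ _ (norm_ne_zero_iff.2 (hφ0 x))]
  · have hχ : χ x = 0 := χ.zero_of_le_dist (mem_sphere.1 hx).ge
    have hφx : φ x = x := by simp [φ, hχ]
    simp [hφx, mem_sphere_zero_iff_norm.1 hx, hR.ne']

theorem exists_isFixedPt_of_continuous_of_norm_le {C : ℝ} {f : E → E} (hf : Continuous f)
    (hC : ∀ x, ‖f x‖ ≤ C) : ∃ x, Function.IsFixedPt f x := by
  by_contra! hfix
  have hC0 : 0 ≤ C := (norm_nonneg _).trans (hC 0)
  obtain ⟨x₀, -, hmin⟩ := (isCompact_closedBall (0 : E) (C + 1)).exists_isMinOn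
    (nonempty_closedBall.2 (by linarith)) (hf.dist continuous_id).continuousOn
  obtain ⟨g, hg, hgf, -⟩ := hf.exists_contDiff_approx 1
    (ε := fun _ => min 1 (dist (f x₀) x₀)) continuous_const
    fun _ => lt_min one_pos (dist_pos.2 (hfix x₀))
  have hgC (x : E) : ‖g x‖ ≤ C + 1 := by
    have hdist := (hgf x).le.trans (min_le_left _ _)
    rw [dist_eq_norm] at hdist
    linarith [norm_le_norm_add_norm_sub' (g x) (f x), hC x]
  obtain ⟨x, hx⟩ := exists_isFixedPt_of_contDiff_of_norm_le hg hgC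
  have hxC : x ∈ closedBall (0 : E) (C + 1) := mem_closedBall_zero_iff.2 (hx.eq ▸ hgC x)
  have hlt : dist (f x) x < dist (f x₀) x₀ := by
    simpa only [hx.eq, dist_comm x] using (hgf x).trans_le (min_le_right _ _)
  exact (hmin hxC).not_gt hlt

end InnerProductSpace

/-- **Brouwer's fixed point theorem**. -/
theorem exists_isFixedPt_of_isCompact_of_convex {E : Type*} [AddCommGroup E] [TopologicalSpace E]
    [IsTopologicalAddGroup E] [T2Space E] [Module ℝ E] [ContinuousSMul ℝ E] [FiniteDimensional ℝ E]
    {K : Set E} (hne : K.Nonempty) (hK : IsCompact K) (hconv : Convex ℝ K) {f : K → K}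
    (hf : Continuous f) : ∃ x, Function.IsFixedPt f x := by
  let e : E ≃L[ℝ] EuclideanSpace ℝ (Fin (Module.finrank ℝ E)) := toEuclidean
  have heK : IsCompact (e '' K) := hK.image e.continuous
  obtain ⟨P, hP, hPK, hPid⟩ := exists_lipschitzWith_one_retraction (hne.image e) heK.isComplete
    (hconv.is_linear_image e.toLinearEquiv.isLinear)
  let ρ (v : EuclideanSpace ℝ (Fin (Module.finrank ℝ E))) : K :=
    ⟨e.symm (P v), by obtain ⟨x, hx, hxv⟩ := hPK v; simpa [← hxv] using hx⟩
  have hρ : Continuous ρ := (e.symm.continuous.comp hP.continuous).subtype_mk _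
  obtain ⟨C, hC⟩ := heK.isBounded.exists_norm_le
  obtain ⟨v, hv⟩ := exists_isFixedPt_of_continuous_of_norm_le (f := fun v => e (f (ρ v)))
    (e.continuous.comp (continuous_subtype_val.comp (hf.comp hρ)))
    fun v => hC _ (mem_image_of_mem e (f (ρ v)).2)
  have hPv : P v = v := hPid v (hv.eq ▸ mem_image_of_mem e (f (ρ v)).2)
  exact ⟨ρ v, Subtype.ext (e.injective (by simpa [ρ, hPv] using hv.eq))⟩

end Brouwer

section Schauder

theorem exists_continuousMap_stdSimplex_subordinate {X ι : Type*} [TopologicalSpace X]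
    [NormalSpace X] [Fintype ι] {U : ι → Set X} (hU : ∀ i, IsOpen (U i)) (hcov : ⋃ i, U i = univ) :
    ∃ w : C(X, stdSimplex ℝ ι), ∀ x i, w x i ≠ 0 → x ∈ U i := by
  obtain ⟨p, hp⟩ := PartitionOfUnity.exists_isSubordinate_of_locallyFinite isClosed_univ U hU
    (locallyFinite_of_finite U) hcov.ge
  let w (x : X) : stdSimplex ℝ ι := ⟨fun i => p i x, fun i => p.nonneg i x, by
    rw [← finsum_eq_sum_of_fintype, p.sum_eq_one (mem_univ x)]⟩
  exact ⟨⟨w, (continuous_pi fun i => (p i).continuous).subtype_mk _⟩,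
    fun x i hi => hp i (subset_tsupport _ hi)⟩

variable {Y : Type*} [AddCommGroup Y] [Module ℝ Y] [TopologicalSpace Y] [IsTopologicalAddGroup Y]
  [ContinuousSMul ℝ Y] [LocallyConvexSpace ℝ Y] [T2Space Y] {D K : Set Y}

/-- `y ↦ ∑ i, w y i • i` is the Schauder projection. -/
theorem exists_continuousMap_stdSimplex_sub_sum_smul_mem (hK : IsCompact K) {W : Set Y}
    (hW : W ∈ 𝓝 0) :
    ∃ t : Finset Y, ↑t ⊆ K ∧ ∃ w : C(K, stdSimplex ℝ t),
      ∀ y : K, (y : Y) - ∑ i, w y i • (i : Y) ∈ W := by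
  obtain ⟨V, ⟨h0V, hVo, hVc⟩, hVW⟩ := (LocallyConvexSpace.convex_open_basis_zero ℝ Y).mem_iff.1 hW
  have hopen (c : Y) : IsOpen {y | y - c ∈ V} := hVo.preimage (by fun_prop)
  obtain ⟨t, htK, hcov⟩ := hK.elim_nhds_subcover (fun c => {y | y - c ∈ V})
    fun c _ => (hopen c).mem_nhds (by simpa using h0V)
  have : CompactSpace K := isCompact_iff_compactSpace.1 hK
  obtain ⟨w, hw⟩ := exists_continuousMap_stdSimplex_subordinate
    (U := fun i : t => {y : K | (y : Y) - i ∈ V})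
    (fun i => (hopen i).preimage continuous_subtype_val)
    (eq_univ_of_forall fun y => by
      obtain ⟨c, hc, hyc⟩ := mem_iUnion₂.1 (hcov y.2)
      exact mem_iUnion.2 ⟨⟨c, hc⟩, hyc⟩)
  refine ⟨t, htK, w, fun y => hVW ?_⟩
  have hsum : (y : Y) - ∑ i, w y i • (i : Y) = ∑ᶠ i, w y i • ((y : Y) - i) := by
    simp only [finsum_eq_sum_of_fintype, smul_sub, Finset.sum_sub_distrib, ← Finset.sum_smul,
      stdSimplex.sum_eq_one, one_smul]
  rw [hsum]
  exact hVc.finsum_mem (stdSimplex.zero_le (w y))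
    (by rw [finsum_eq_sum_of_fintype, stdSimplex.sum_eq_one]) (hw y)

theorem exists_sub_mem_of_isCompact_of_convex (hne : D.Nonempty) (hconv : Convex ℝ D)
    (hK : IsCompact K) (hKD : K ⊆ D) {T : D → D} (hT : Continuous T) (hTK : ∀ x, (T x : Y) ∈ K)
    {W : Set Y} (hW : W ∈ 𝓝 0) : ∃ x, (T x : Y) - x ∈ W := by
  obtain ⟨t, htK, w, hw⟩ := exists_continuousMap_stdSimplex_sub_sum_smul_mem hK hW
  let S (x : D) : K := ⟨T x, hTK x⟩
  have hS : Continuous S := (continuous_subtype_val.comp hT).subtype_mk _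
  let c (a : stdSimplex ℝ t) : D := ⟨∑ i, a i • (i : Y),
    hconv.sum_mem (fun i _ => a.2.1 i) a.2.2 fun i _ => hKD (htK i.2)⟩
  have hc : Continuous c := Continuous.subtype_mk (continuous_finsetSum _ fun i _ =>
    ((continuous_apply i).comp continuous_subtype_val).smul continuous_const) _
  obtain ⟨x₀, hx₀⟩ := hne
  obtain ⟨a, ha⟩ := exists_isFixedPt_of_isCompact_of_convex ⟨_, (w (S ⟨x₀, hx₀⟩)).2⟩
    (isCompact_stdSimplex ℝ t) (convex_stdSimplex ℝ t) (w.continuous.comp (hS.comp hc))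
  have hca : ∑ i, w (S (c a)) i • (i : Y) = c a := congrArg (fun b => (c b : Y)) ha.eq
  exact ⟨c a, hca ▸ hw (S (c a))⟩

/-- **Schauder–Tychonoff fixed point theorem**. -/
theorem exists_isFixedPt_of_forall_mem_isCompact (hne : D.Nonempty) (hconv : Convex ℝ D)
    (hK : IsCompact K) (hKD : K ⊆ D) {T : D → D} (hT : Continuous T)
    (hTK : ∀ x, (T x : Y) ∈ K) : ∃ x, Function.IsFixedPt T x := by
  have hneBot : (comap (fun x : D => (T x : Y) - x) (𝓝 0)).NeBot :=
    comap_neBot fun W hW => exists_sub_mem_of_isCompact_of_convex hne hconv hK hKD hT hTK hW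
  let u := Ultrafilter.of (comap (fun x : D => (T x : Y) - x) (𝓝 0))
  have hsub : Tendsto (fun x : D => (T x : Y) - x) u (𝓝 0) :=
    tendsto_comap.mono_left (Ultrafilter.of_le _)
  obtain ⟨z, hzK, hz⟩ := hK.ultrafilter_le_nhds (u.map fun x => (T x : Y))
    (tendsto_principal.2 (Eventually.of_forall hTK))
  have hTz : Tendsto T u (𝓝 ⟨z, hKD hzK⟩) := tendsto_subtype_rng.2 hz
  have hidz : Tendsto id (u : Filter D) (𝓝 ⟨z, hKD hzK⟩) :=
    tendsto_subtype_rng.2 (by simpa using Tendsto.sub hz hsub)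
  exact ⟨⟨z, hKD hzK⟩, tendsto_nhds_unique ((hT.tendsto _).comp hidz) hTz⟩

end Schauder

theorem continuous_of_isFixedPt_of_uniform_contraction {X D : Type*} [TopologicalSpace X]
    [PseudoMetricSpace D] {N : X × D → D} (hN : ∀ y, Continuous fun x => N (x, y)) {L : ℝ}
    (hL : L < 1) (hcontr : ∀ x y y', dist (N (x, y)) (N (x, y')) ≤ L * dist y y') {S : X → D}
    (hS : ∀ x, Function.IsFixedPt (fun y => N (x, y)) (S x)) : Continuous S := by
  have hL' : 0 < 1 - L := sub_pos.2 hL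
  have hbound (x₀ x : X) : dist (S x) (S x₀) ≤ dist (N (x, S x₀)) (N (x₀, S x₀)) / (1 - L) := by
    rw [(hS x₀).eq, le_div_iff₀ hL']
    have hcontr' := hcontr x (S x) (S x₀)
    rw [(hS x).eq] at hcontr'
    linarith [dist_triangle (S x) (N (x, S x₀)) (S x₀)]
  refine continuous_iff_continuousAt.2 fun x₀ => tendsto_iff_dist_tendsto_zero.2 ?_
  refine squeeze_zero (fun _ => dist_nonneg) (hbound x₀) ?_
  have hcont : Continuous fun x => dist (N (x, S x₀)) (N (x₀, S x₀)) / (1 - L) :=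
    ((hN (S x₀)).dist continuous_const).div_const _
  simpa using hcont.tendsto x₀

theorem avramescu_fixed_point_general
    {Y : Type*} [AddCommGroup Y] [Module ℝ Y] [TopologicalSpace Y] [IsTopologicalAddGroup Y]
    [ContinuousSMul ℝ Y] [LocallyConvexSpace ℝ Y] [T2Space Y]
    {D₁ : Set Y} (hne : D₁.Nonempty) (hconv : Convex ℝ D₁)
    {D₂ : Type*} [MetricSpace D₂] [CompleteSpace D₂] [Nonempty D₂]
    {N₁ : D₁ × D₂ → D₁} {N₂ : D₁ × D₂ → D₂}
    (hcont₁ : Continuous N₁) (hcont₂ : ∀ y, Continuous fun x => N₂ (x, y))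
    (hcompact : IsCompact (closure (range fun p : D₁ × D₂ => (N₁ p : Y))))
    (hsub : closure (range fun p : D₁ × D₂ => (N₁ p : Y)) ⊆ D₁)
    {L : ℝ} (hL : L < 1)
    (hcontr : ∀ (x : D₁) (y y' : D₂), dist (N₂ (x, y)) (N₂ (x, y')) ≤ L * dist y y') :
    ∃ p : D₁ × D₂, N₁ p = p.1 ∧ N₂ p = p.2 := by
  have hcontracting (x : D₁) : ContractingWith L.toNNReal fun y => N₂ (x, y) :=
    ⟨Real.toNNReal_lt_one.2 hL, LipschitzWith.of_dist_le' (hcontr x)⟩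
  let S (x : D₁) : D₂ := (hcontracting x).fixedPoint
  have hS (x : D₁) : Function.IsFixedPt (fun y => N₂ (x, y)) (S x) :=
    (hcontracting x).fixedPoint_isFixedPt
  have hScont : Continuous S := continuous_of_isFixedPt_of_uniform_contraction hcont₂ hL hcontr hS
  obtain ⟨x, hx⟩ := exists_isFixedPt_of_forall_mem_isCompact hne hconv hcompact hsub
    (T := fun x => N₁ (x, S x)) (by fun_prop) fun x => subset_closure ⟨(x, S x), rfl⟩
  exact ⟨(x, S x), hx, hS x⟩

/-- **Avramescu's fixed point theorem.**
Let `D₁` be a nonempty closed convex subset of a normed space `Y`, `D₂` a nonempty complete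
metric space, and `N₁ : D₁ × D₂ → D₁`, `N₂ : D₁ × D₂ → D₂` continuous maps such that
`N₁(D₁ × D₂)` is relatively compact in `Y` and `N₂` is a uniform contraction in its second
variable with constant `L ∈ [0, 1)`. Then the pair `(N₁, N₂)` has a fixed point. -/
theorem avramescu_fixed_point
    {Y : Type*} [NormedAddCommGroup Y] [NormedSpace ℝ Y]
    (D₁ : Set Y) (hne : D₁.Nonempty) (hclosed : IsClosed D₁) (hconv : Convex ℝ D₁)
    {D₂ : Type*} [MetricSpace D₂] [CompleteSpace D₂] [Nonempty D₂]
    (N₁ : D₁ × D₂ → D₁) (N₂ : D₁ × D₂ → D₂)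
    (hcont₁ : Continuous N₁) (hcont₂ : Continuous N₂)
    (hcompact : IsCompact (closure (Set.range (fun p : D₁ × D₂ => (N₁ p : Y)))))
    (L : ℝ) (hL₀ : 0 ≤ L) (hL₁ : L < 1)
    (hcontr : ∀ (x : D₁) (y y' : D₂), dist (N₂ (x, y)) (N₂ (x, y')) ≤ L * dist y y') :
    ∃ p : D₁ × D₂, N₁ p = p.1 ∧ N₂ p = p.2 := by
  have hsub : closure (range fun p : D₁ × D₂ => (N₁ p : Y)) ⊆ D₁ :=
    closure_minimal (range_subset_iff.2 fun p => (N₁ p).2) hclosed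
  exact avramescu_fixed_point_general hne hconv hcont₁ (fun _ => by fun_prop) hcompact hsub hL₁
    hcontr
end
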